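/- arXiv:2512.14497 — 5 statements merged into one kernel-verified Lean document; each statement's English description precedes it below -/
import Mathlib

section
/- Let ρ and H be N×N Hermitian complex matrices. Then the infimum, over all N×N unitary matrices V, of the (necessarily real) quantity Tr(V ρ V* H) equals ∑_{i=1}^N λ_i^↓ ε_i^↑, where λ_1^↓ ≥ … ≥ λ_N^↓ are the eigenvalues of ρ listed with multiplicity in nonincreasing order and ε_1^↑ ≤ … ≤ ε_N^↑ are the eigenvalues of H listed with multiplicity in nondecreasing order; moreover this infimum is attained by some unitary V. -/
open scoped BigOperators ComplexOrder
open Matrix Kronecker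

/-- Nondecreasing rearrangement of a finite real-valued family. -/
noncomputable def sortUp {ι : Type*} [Fintype ι] (f : ι → ℝ) : Fin (Fintype.card ι) → ℝ :=
  (f ∘ (Fintype.equivFin ι).symm) ∘ Tuple.sort (f ∘ (Fintype.equivFin ι).symm)

/-- Nonincreasing rearrangement of a finite real-valued family. -/
noncomputable def sortDown {ι : Type*} [Fintype ι] (f : ι → ℝ) : Fin (Fintype.card ι) → ℝ :=
  fun i => sortUp f i.rev

/-- Ergotropy ξ(ρ,H) = Tr(ρH) − inf over unitaries V of Tr(V ρ V* H). -/
noncomputable def ergotropy {ι : Type*} [Fintype ι] [DecidableEq ι] (ρ H : Matrix ι ι ℂ) : ℝ :=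
  ((ρ * H).trace).re -
    ⨅ V : Matrix.unitaryGroup ι ℂ,
      (((V : Matrix ι ι ℂ) * ρ * star (V : Matrix ι ι ℂ) * H).trace).re

/-- Passive energy E_p(ρ,H) = ∑ λ_i^↓ ε_i^↑. -/
noncomputable def passiveEnergy {ι : Type*} [Fintype ι] [DecidableEq ι]
    {ρ H : Matrix ι ι ℂ} (hρ : ρ.IsHermitian) (hH : H.IsHermitian) : ℝ :=
  ∑ i, sortDown hρ.eigenvalues i * sortUp hH.eigenvalues i

/-- |u⟩⟨u|, the matrix with entries u_i conj(u_j). -/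
noncomputable def ketbra {ι : Type*} (u : ι → ℂ) : Matrix ι ι ℂ := Matrix.vecMulVec u (star u)

/-- Tensor (Kronecker) product of vectors: (u ⊗ v)_(i,j) = u_i v_j. -/
noncomputable def vecTensor {ιa ιb : Type*} (u : ιa → ℂ) (v : ιb → ℂ) : ιa × ιb → ℂ :=
  fun p => u p.1 * v p.2

/-- The local measurement channel Π(ρ) = ∑_k (P_k ⊗ I) ρ (P_k ⊗ I). -/
noncomputable def pinch {ιa ιb K : Type*} [Fintype ιa] [Fintype ιb] [Fintype K]
    [DecidableEq ιa] [DecidableEq ιb]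
    (P : K → Matrix ιa ιa ℂ) (ρ : Matrix (ιa × ιb) (ιa × ιb) ℂ) :
    Matrix (ιa × ιb) (ιa × ιb) ℂ :=
  ∑ k, (P k ⊗ₖ (1 : Matrix ιb ιb ℂ)) * ρ * (P k ⊗ₖ (1 : Matrix ιb ιb ℂ))

/-- Local ergotropy ξ^l(ρ,H) = Tr(ρH) − inf over local unitaries U⊗V of Tr((U⊗V) ρ (U⊗V)* H). -/
noncomputable def localErgotropy {n m : ℕ}
    (ρ H : Matrix (Fin n × Fin m) (Fin n × Fin m) ℂ) : ℝ :=
  ((ρ * H).trace).re -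
    ⨅ W : Matrix.unitaryGroup (Fin n) ℂ × Matrix.unitaryGroup (Fin m) ℂ,
      ((((W.1 : Matrix (Fin n) (Fin n) ℂ) ⊗ₖ (W.2 : Matrix (Fin m) (Fin m) ℂ)) * ρ *
        star ((W.1 : Matrix (Fin n) (Fin n) ℂ) ⊗ₖ (W.2 : Matrix (Fin m) (Fin m) ℂ)) * H).trace).re

/-- First marginal (partial trace over the second factor). -/
noncomputable def marginalA {n m : ℕ} (ρ : Matrix (Fin n × Fin m) (Fin n × Fin m) ℂ) :
    Matrix (Fin n) (Fin n) ℂ :=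
  Matrix.of fun i i' => ∑ j, ρ (i, j) (i', j)

/-- Second marginal (partial trace over the first factor). -/
noncomputable def marginalB {n m : ℕ} (ρ : Matrix (Fin n × Fin m) (Fin n × Fin m) ℂ) :
    Matrix (Fin m) (Fin m) ℂ :=
  Matrix.of fun j j' => ∑ i, ρ (i, j) (i, j')

/-!
In eigenbases of `ρ` and `H`, with eigenvalues `a` and `b`, the quantity `Tr(V ρ V* H)` becomes
`∑ i, ∑ j, b i * |U i j|² * a j`, where `U` is `V` seen from one eigenbasis to the other and hence
ranges over all unitary matrices. The matrix `|U i j|²` is doubly stochastic, so by Birkhoff's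
theorem the sum is at least its value at some permutation matrix, and permutation matrices are
themselves unitary. What remains is the rearrangement inequality for `∑ i, a (σ i) * b i`.
-/

section Rearrangement

variable {ι : Type*} [Fintype ι]

theorem sortUp_monotone (f : ι → ℝ) : Monotone (sortUp f) :=
  Tuple.monotone_sort _

theorem sortDown_antitone (f : ι → ℝ) : Antitone (sortDown f) := fun _ _ h =>
  sortUp_monotone f (Fin.rev_le_rev.2 h)

theorem exists_sortUp_eq_comp_equiv (f : ι → ℝ) :
    ∃ e : Fin (Fintype.card ι) ≃ ι, sortUp f = f ∘ e :=
  ⟨(Tuple.sort (f ∘ (Fintype.equivFin ι).symm)).trans (Fintype.equivFin ι).symm, rfl⟩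

theorem exists_sortDown_eq_comp_equiv (f : ι → ℝ) :
    ∃ e : Fin (Fintype.card ι) ≃ ι, sortDown f = f ∘ e := by
  obtain ⟨e, he⟩ := exists_sortUp_eq_comp_equiv f
  exact ⟨Fin.revPerm.trans e, funext fun i => congrFun he i.rev⟩

theorem isLeast_sum_comp_perm_mul (a b : ι → ℝ) :
    IsLeast (Set.range fun σ : Equiv.Perm ι => ∑ i, a (σ i) * b i)
      (∑ k, sortDown a k * sortUp b k) := by
  obtain ⟨d, hd⟩ := exists_sortDown_eq_comp_equiv a
  obtain ⟨u, hu⟩ := exists_sortUp_eq_comp_equiv b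
  have sum_eq (σ : Equiv.Perm ι) :
      ∑ i, a (σ i) * b i = ∑ k, sortDown a (d.symm (σ (u k))) * sortUp b k := by
    simp only [hd, hu, Function.comp_apply, Equiv.apply_symm_apply]
    exact (Equiv.sum_comp u fun i => a (σ i) * b i).symm
  have antivary : Antivary (sortDown a) (sortUp b) :=
    (sortDown_antitone a).antivary (sortUp_monotone b)
  simp only [sum_eq]
  refine ⟨⟨u.symm.trans d, ?_⟩, ?_⟩
  · simp only [Equiv.trans_apply, Equiv.symm_apply_apply]
  · rintro _ ⟨σ, rfl⟩
    exact antivary.sum_mul_le_sum_comp_perm_mul (σ := (u.trans σ).trans d.symm)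

end Rearrangement

section Birkhoff

variable {R n : Type*} [Field R] [LinearOrder R] [IsStrictOrderedRing R] [Fintype n]
  [DecidableEq n]

theorem exists_perm_map_permMatrix_le_of_mem_doublyStochastic {M : Matrix n n R}
    (hM : M ∈ doublyStochastic R n) (f : Matrix n n R →ₗ[R] R) :
    ∃ σ : Equiv.Perm n, f (σ.permMatrix R) ≤ f M := by
  rw [← SetLike.mem_coe, doublyStochastic_eq_convexHull_permMatrix] at hM
  obtain ⟨_, ⟨σ, rfl⟩, hσ⟩ :=
    (f.concaveOn convex_univ).exists_le_of_mem_convexHull (Set.subset_univ _) hM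
  exact ⟨σ, hσ⟩

theorem dotProduct_permMatrix_mulVec {S : Type*} [CommRing S] (a b : n → S) (σ : Equiv.Perm n) :
    b ⬝ᵥ σ.permMatrix S *ᵥ a = ∑ i, a (σ i) * b i := by
  rw [permMatrix_mulVec, dotProduct_comm]
  rfl

theorem exists_perm_sum_le_dotProduct_mulVec {M : Matrix n n R} (hM : M ∈ doublyStochastic R n)
    (a b : n → R) : ∃ σ : Equiv.Perm n, ∑ i, a (σ i) * b i ≤ b ⬝ᵥ M *ᵥ a := by
  obtain ⟨σ, hσ⟩ := exists_perm_map_permMatrix_le_of_mem_doublyStochastic hM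
    ((dotProductBilin R R b).comp ((mulVecBilin R R).flip a))
  exact ⟨σ, (dotProduct_permMatrix_mulVec a b σ).symm.trans_le hσ⟩

end Birkhoff

section Unistochastic

variable {𝕜 m n : Type*} [RCLike 𝕜]

/-- The matrix `|U i j|²` of squared moduli of the entries of `U`, called unistochastic when `U` is
unitary. It carries the dependence on `U` of `Tr(U D U* E)` for real diagonal `D` and `E`, and is
defined here for every rectangular `U`. -/
def unistochastic (U : Matrix m n 𝕜) : Matrix m n ℝ :=
  U.map fun z => ‖z‖ ^ 2

theorem unistochastic_apply (U : Matrix m n 𝕜) (i : m) (j : n) :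
    unistochastic U i j = ‖U i j‖ ^ 2 :=
  rfl

theorem unistochastic_conjTranspose (U : Matrix m n 𝕜) :
    unistochastic Uᴴ = (unistochastic U)ᵀ := by
  ext i j
  simp only [unistochastic_apply, conjTranspose_apply, transpose_apply, norm_star]

theorem unistochastic_permMatrix [DecidableEq n] (σ : Equiv.Perm n) :
    unistochastic (σ.permMatrix 𝕜) = σ.permMatrix ℝ := by
  ext i j
  simp only [unistochastic_apply, PEquiv.toMatrix_apply]
  split_ifs <;> simp

theorem sum_unistochastic_row [Fintype n] [DecidableEq m] {U : Matrix m n 𝕜} (hU : U * Uᴴ = 1)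
    (i : m) : ∑ j, unistochastic U i j = 1 := by
  have diag_entry : ∑ j, U i j * starRingEnd 𝕜 (U i j) = 1 := by
    simpa only [mul_apply, conjTranspose_apply, starRingEnd_apply, one_apply_eq]
      using congrFun₂ hU i i
  apply RCLike.ofReal_injective (K := 𝕜)
  simpa only [unistochastic_apply, map_sum, map_pow, map_one, ← RCLike.mul_conj] using diag_entry

theorem unistochastic_mem_doublyStochastic [Fintype n] [DecidableEq n] {U : Matrix n n 𝕜}
    (hU : U ∈ unitaryGroup n 𝕜) : unistochastic U ∈ doublyStochastic ℝ n := by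
  refine mem_doublyStochastic_iff_sum.2 ⟨fun _ _ => sq_nonneg _, fun i => ?_, fun j => ?_⟩
  · exact sum_unistochastic_row (mem_unitaryGroup_iff.1 hU) i
  · have hUH : Uᴴ * Uᴴᴴ = 1 := by
      rw [conjTranspose_conjTranspose]
      exact mem_unitaryGroup_iff'.1 hU
    simpa only [unistochastic_conjTranspose, transpose_apply] using sum_unistochastic_row hUH j

theorem mul_diagonal_mul_conjTranspose_apply_self [Fintype n] [DecidableEq n] (U : Matrix m n 𝕜)
    (a : n → ℝ) (i : m) :
    (U * diagonal (RCLike.ofReal ∘ a : n → 𝕜) * Uᴴ) i i = ((unistochastic U *ᵥ a) i : 𝕜) := by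
  rw [mul_apply]
  simp only [mul_diagonal, conjTranspose_apply, Function.comp_apply, mulVec, dotProduct,
    unistochastic_apply, map_sum, map_mul, map_pow, ← RCLike.mul_conj, starRingEnd_apply]
  exact Finset.sum_congr rfl fun _ _ => mul_right_comm _ _ _

theorem trace_mul_diagonal_mul_conjTranspose_mul_diagonal [Fintype m] [DecidableEq m] [Fintype n]
    [DecidableEq n] (U : Matrix m n 𝕜) (a : n → ℝ) (b : m → ℝ) :
    (U * diagonal (RCLike.ofReal ∘ a : n → 𝕜) * Uᴴ * diagonal (RCLike.ofReal ∘ b : m → 𝕜)).trace =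
      ((b ⬝ᵥ unistochastic U *ᵥ a : ℝ) : 𝕜) := by
  simp only [trace, diag_apply, mul_diagonal, mul_diagonal_mul_conjTranspose_apply_self, dotProduct,
    map_sum, map_mul, Function.comp_apply]
  exact Finset.sum_congr rfl fun _ _ => mul_comm _ _

end Unistochastic

section UnitaryOrbit

variable {𝕜 ι : Type*} [RCLike 𝕜] [Fintype ι] [DecidableEq ι]

theorem permMatrix_mem_unitaryGroup {S : Type*} [CommRing S] [StarRing S] (σ : Equiv.Perm ι) :
    σ.permMatrix S ∈ unitaryGroup ι S := by
  rw [mem_unitaryGroup_iff, star_eq_conjTranspose, conjTranspose_permMatrix, ← permMatrix_mul,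
    inv_mul_cancel, permMatrix_one]

theorem isLeast_dotProduct_unistochastic_mulVec (a b : ι → ℝ) :
    IsLeast (Set.range fun U : unitaryGroup ι 𝕜 => b ⬝ᵥ unistochastic (U : Matrix ι ι 𝕜) *ᵥ a)
      (∑ k, sortDown a k * sortUp b k) := by
  obtain ⟨⟨σ, hσ⟩, hmin⟩ := isLeast_sum_comp_perm_mul a b
  refine ⟨⟨⟨σ.permMatrix 𝕜, permMatrix_mem_unitaryGroup σ⟩, ?_⟩, ?_⟩
  · simpa only [unistochastic_permMatrix, dotProduct_permMatrix_mulVec] using hσ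
  · rintro _ ⟨U, rfl⟩
    obtain ⟨τ, hτ⟩ :=
      exists_perm_sum_le_dotProduct_mulVec (unistochastic_mem_doublyStochastic U.2) a b
    exact (hmin ⟨τ, rfl⟩).trans hτ

variable {ρ H : Matrix ι ι 𝕜} (hρ : ρ.IsHermitian) (hH : H.IsHermitian)

theorem trace_conj_mul_eq_dotProduct_unistochastic_mulVec (V : Matrix ι ι 𝕜) :
    (V * ρ * star V * H).trace =
      ((hH.eigenvalues ⬝ᵥ
        unistochastic (star (hH.eigenvectorUnitary : Matrix ι ι 𝕜) * V *
          (hρ.eigenvectorUnitary : Matrix ι ι 𝕜)) *ᵥ hρ.eigenvalues : ℝ) : 𝕜) := by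
  rw [← trace_mul_diagonal_mul_conjTranspose_mul_diagonal]
  conv_lhs => rw [hρ.spectral_theorem, hH.spectral_theorem, Unitary.conjStarAlgAut_apply,
    Unitary.conjStarAlgAut_apply, ← mul_assoc, trace_mul_comm]
  simp only [← star_eq_conjTranspose, star_mul, star_star, mul_assoc]

theorem range_re_trace_conj_mul :
    Set.range (fun V : unitaryGroup ι 𝕜 =>
        RCLike.re ((V : Matrix ι ι 𝕜) * ρ * star (V : Matrix ι ι 𝕜) * H).trace) =
      Set.range fun U : unitaryGroup ι 𝕜 =>
        hH.eigenvalues ⬝ᵥ unistochastic (U : Matrix ι ι 𝕜) *ᵥ hρ.eigenvalues := by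
  let toEigenbases : unitaryGroup ι 𝕜 ≃ unitaryGroup ι 𝕜 :=
    (Equiv.mulLeft (star hH.eigenvectorUnitary)).trans (Equiv.mulRight hρ.eigenvectorUnitary)
  rw [← toEigenbases.surjective.range_comp fun U : unitaryGroup ι 𝕜 =>
    hH.eigenvalues ⬝ᵥ unistochastic (U : Matrix ι ι 𝕜) *ᵥ hρ.eigenvalues]
  congr 1
  funext V
  rw [trace_conj_mul_eq_dotProduct_unistochastic_mulVec hρ hH, RCLike.ofReal_re]
  rfl

end UnitaryOrbit

theorem inf_unitary_trace_eq_passiveEnergy_general {𝕜 ι : Type*} [RCLike 𝕜] [Fintype ι]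
    [DecidableEq ι] {ρ H : Matrix ι ι 𝕜} (hρ : ρ.IsHermitian) (hH : H.IsHermitian) :
    IsLeast
      { x : ℝ | ∃ V : unitaryGroup ι 𝕜,
          x = RCLike.re ((V : Matrix ι ι 𝕜) * ρ * star (V : Matrix ι ι 𝕜) * H).trace }
      (∑ i, sortDown hρ.eigenvalues i * sortUp hH.eigenvalues i) := by
  have isLeast_range :=
    isLeast_dotProduct_unistochastic_mulVec (𝕜 := 𝕜) hρ.eigenvalues hH.eigenvalues
  rw [← range_re_trace_conj_mul hρ hH] at isLeast_range
  simpa only [Set.range, eq_comm] using isLeast_range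

/-- the infimum over unitaries V of Tr(VρV*H) equals ∑ λ_i^↓ ε_i^↑,
and is attained by some unitary. -/
theorem inf_unitary_trace_eq_passiveEnergy {ι : Type*} [Fintype ι] [DecidableEq ι]
    {ρ H : Matrix ι ι ℂ} (hρ : ρ.IsHermitian) (hH : H.IsHermitian) :
    IsLeast
      { x : ℝ | ∃ V : Matrix.unitaryGroup ι ℂ,
          x = (((V : Matrix ι ι ℂ) * ρ * star (V : Matrix ι ι ℂ) * H).trace).re }
      (∑ i, sortDown hρ.eigenvalues i * sortUp hH.eigenvalues i) :=
  inf_unitary_trace_eq_passiveEnergy_general hρ hH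
end

section
/- Let n, m be finite dimensions, let (P_k) be a finite family of n×n orthogonal projection matrices (P_k* = P_k = P_k²) that are pairwise orthogonal and sum to I_n, and let Π(ρ) := ∑_k (P_k ⊗ I_m) ρ (P_k ⊗ I_m) be the associated measurement channel on nm×nm matrices. Let H be an nm×nm Hermitian matrix, ρ an nm×nm density matrix, and U := I_n ⊗ U_b with U_b an m×m unitary, such that U H = H U. Then ξ(U ρ U*, H) − ξ(Π(U ρ U*), H) = ξ(ρ, H) − ξ(Π(ρ), H), i.e., the ergotropy-based measurement-induced nonlocality N_ξ is invariant under such restricted local unitaries. -/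
open scoped BigOperators ComplexOrder
open Matrix Kronecker

/-! A unitary commuting with the Hamiltonian preserves the energy, and right translation by it
permutes the unitaries over which the ergotropy optimises, so conjugation by it preserves the
ergotropy. The measurement channel is linear over the commutant of the matrices `P k ⊗ 1`, so it
intertwines conjugation by a unitary of that commutant; every `1 ⊗ U_b` belongs to it. -/

theorem commute_star_left_of_mem_unitary {R : Type*} [Monoid R] [StarMul R] {u a : R}
    (hu : u ∈ unitary R) (h : Commute u a) : Commute (star u) a :=
  Commute.units_inv_left (u := Unitary.toUnits ⟨u, hu⟩) h

theorem iInf_unitary_conj {R α : Type*} [Monoid R] [StarMul R] [InfSet α] {u : R}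
    (hu : u ∈ unitary R) (x : R) (f : R → α) :
    ⨅ v : unitary R, f (v * (u * x * star u) * star (v : R)) =
      ⨅ v : unitary R, f (v * x * star (v : R)) :=
  (Equiv.mulRight ⟨u, hu⟩).iInf_congr fun v => by
    simp only [Equiv.coe_mulRight, Submonoid.coe_mul, star_mul, mul_assoc]

section Ergotropy

variable {ι : Type*} [Fintype ι] [DecidableEq ι]

theorem trace_unitary_conj_mul_of_commute {R : Type*} [CommRing R] [StarRing R]
    {U H : Matrix ι ι R} (hU : U ∈ Matrix.unitaryGroup ι R) (hUH : Commute U H)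
    (ρ : Matrix ι ι R) : (U * ρ * star U * H).trace = (ρ * H).trace := by
  have hconj : U * ρ * star U * H = U * (ρ * H) * star U := by
    simp only [mul_assoc, (commute_star_left_of_mem_unitary hU hUH).eq]
  rw [hconj]
  exact Matrix.trace_units_conj (Unitary.toUnits ⟨U, hU⟩) (ρ * H)

theorem ergotropy_unitary_conj_of_commute {U H : Matrix ι ι ℂ}
    (hU : U ∈ Matrix.unitaryGroup ι ℂ) (hUH : Commute U H) (ρ : Matrix ι ι ℂ) :
    ergotropy (U * ρ * star U) H = ergotropy ρ H := by
  rw [ergotropy, ergotropy, trace_unitary_conj_mul_of_commute hU hUH]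
  exact congrArg _ (iInf_unitary_conj hU ρ fun σ => (σ * H).trace.re)

end Ergotropy

section Pinch

theorem commute_one_kronecker_kronecker_one {m n R : Type*} [Fintype m] [Fintype n]
    [DecidableEq m] [DecidableEq n] [CommSemiring R] (A : Matrix m m R) (B : Matrix n n R) :
    Commute ((1 : Matrix m m R) ⊗ₖ B) (A ⊗ₖ (1 : Matrix n n R)) := by
  simp only [commute_iff_eq, ← Matrix.mul_kronecker_mul, Matrix.one_mul, Matrix.mul_one]

variable {ιa ιb K : Type*} [Fintype ιa] [Fintype ιb] [Fintype K]
  [DecidableEq ιa] [DecidableEq ιb]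
  {P : K → Matrix ιa ιa ℂ} {A U H : Matrix (ιa × ιb) (ιa × ιb) ℂ}

theorem pinch_mul_left_of_commute (hA : ∀ k, Commute A (P k ⊗ₖ 1))
    (ρ : Matrix (ιa × ιb) (ιa × ιb) ℂ) : pinch P (A * ρ) = A * pinch P ρ := by
  simp only [pinch, Finset.mul_sum, ← mul_assoc, (hA _).eq]

theorem pinch_mul_right_of_commute (hA : ∀ k, Commute A (P k ⊗ₖ 1))
    (ρ : Matrix (ιa × ιb) (ιa × ιb) ℂ) : pinch P (ρ * A) = pinch P ρ * A := by
  simp only [pinch, Finset.sum_mul, mul_assoc, (hA _).eq]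

theorem pinch_unitary_conj_of_commute (hU : U ∈ Matrix.unitaryGroup (ιa × ιb) ℂ)
    (hUP : ∀ k, Commute U (P k ⊗ₖ 1)) (ρ : Matrix (ιa × ιb) (ιa × ιb) ℂ) :
    pinch P (U * ρ * star U) = U * pinch P ρ * star U := by
  rw [pinch_mul_right_of_commute fun k => commute_star_left_of_mem_unitary hU (hUP k),
    pinch_mul_left_of_commute hUP]

theorem emin_restricted_local_unitary_invariance_general
    (hU : U ∈ Matrix.unitaryGroup (ιa × ιb) ℂ) (hUP : ∀ k, Commute U (P k ⊗ₖ 1))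
    (hUH : Commute U H) (ρ : Matrix (ιa × ιb) (ιa × ιb) ℂ) :
    ergotropy (U * ρ * star U) H - ergotropy (pinch P (U * ρ * star U)) H =
      ergotropy ρ H - ergotropy (pinch P ρ) H := by
  rw [pinch_unitary_conj_of_commute hU hUP, ergotropy_unitary_conj_of_commute hU hUH,
    ergotropy_unitary_conj_of_commute hU hUH]

end Pinch

/-- Theorem 1 of the paper: EMIN is invariant under restricted local
unitaries U = I ⊗ U_b commuting with the Hamiltonian. -/
theorem emin_restricted_local_unitary_invariance {n m : ℕ} {K : Type*} [Fintype K]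
    (P : K → Matrix (Fin n) (Fin n) ℂ)
    (hPherm : ∀ k, (P k)ᴴ = P k) (hPidem : ∀ k, P k * P k = P k)
    (hPorth : ∀ k l, k ≠ l → P k * P l = 0)
    (hPsum : ∑ k, P k = (1 : Matrix (Fin n) (Fin n) ℂ))
    {H ρ : Matrix (Fin n × Fin m) (Fin n × Fin m) ℂ}
    (hH : H.IsHermitian) (hρ : ρ.PosSemidef) (hρtr : ρ.trace = 1)
    (Ub : Matrix.unitaryGroup (Fin m) ℂ)
    (U : Matrix (Fin n × Fin m) (Fin n × Fin m) ℂ)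
    (hU : U = (1 : Matrix (Fin n) (Fin n) ℂ) ⊗ₖ (Ub : Matrix (Fin m) (Fin m) ℂ))
    (hUH : U * H = H * U) :
    ergotropy (U * ρ * star U) H - ergotropy (pinch P (U * ρ * star U)) H
      = ergotropy ρ H - ergotropy (pinch P ρ) H := by
  subst hU
  exact emin_restricted_local_unitary_invariance_general
    (Matrix.kronecker_mem_unitary (one_mem _) Ub.2)
    (fun k => commute_one_kronecker_kronecker_one (P k) _) hUH ρ
end

section
/- Let H be an N×N Hermitian complex matrix and ψ ∈ ℂ^N a unit vector. Then ξ(|ψ⟩⟨ψ|, H) = ⟨ψ, Hψ⟩ − ε_min, where |ψ⟩⟨ψ| is the rank-one orthogonal projection onto ψ and ε_min is the smallest eigenvalue of H. -/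
open scoped BigOperators ComplexOrder
open Matrix Kronecker

/-!
Conjugation by `V` turns `|ψ⟩⟨ψ|` into `|Vψ⟩⟨Vψ|`, whose energy is `⟨Vψ, H Vψ⟩`. Any two vectors of
the same norm are related by a unitary, so `Vψ` ranges over the whole sphere through `ψ`, where the
Rayleigh-Ritz principle gives the minimum of the energy: it is `‖ψ‖²` times the smallest eigenvalue.
-/

section Ketbra

variable {m n : Type*} [Fintype n]

lemma mul_ketbra_mul_conjTranspose (A : Matrix m n ℂ) (u : n → ℂ) :
    A * ketbra u * Aᴴ = ketbra (A *ᵥ u) := by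
  rw [ketbra, ketbra, mul_vecMulVec, vecMulVec_mul, star_mulVec]

lemma trace_ketbra_mul (u : n → ℂ) (A : Matrix n n ℂ) :
    (ketbra u * A).trace = star u ⬝ᵥ A *ᵥ u := by
  rw [ketbra, vecMulVec_mul, trace_vecMulVec, dotProduct_comm, dotProduct_mulVec]

end Ketbra

section UnitaryOrbit

lemma star_mulVec_dotProduct_mulVec_of_conjTranspose_mul_self {R m n : Type*} [Semiring R]
    [StarRing R] [Fintype m] [Fintype n] [DecidableEq n] {A : Matrix m n R} (hA : Aᴴ * A = 1)
    (x y : n → R) : star (A *ᵥ x) ⬝ᵥ A *ᵥ y = star x ⬝ᵥ y := by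
  rw [star_mulVec, ← dotProduct_mulVec, mulVec_mulVec, hA, one_mulVec]

variable {𝕜 : Type*} [RCLike 𝕜]

lemma exists_linearIsometryEquiv_apply_eq {E : Type*} [NormedAddCommGroup E]
    [InnerProductSpace 𝕜 E] [FiniteDimensional 𝕜 E] {x y : E} (h : ‖x‖ = ‖y‖) :
    ∃ f : E ≃ₗᵢ[𝕜] E, f x = y := by
  obtain rfl | hx := eq_or_ne x 0
  · exact ⟨.refl 𝕜 E, by simpa [eq_comm] using h⟩
  let e := LinearEquiv.toSpanNonzeroSingleton 𝕜 E x hx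
  let L : (𝕜 ∙ x) →ₗᵢ[𝕜] E :=
    { toLinearMap := LinearMap.toSpanSingleton 𝕜 E y ∘ₗ e.symm
      norm_map' := fun z ↦ by
        obtain ⟨c, rfl⟩ := e.surjective z
        rw [LinearMap.comp_apply, LinearEquiv.coe_coe, e.symm_apply_apply]
        simp [e, norm_smul, h] }
  refine ⟨L.extend.toLinearIsometryEquiv rfl, ?_⟩
  have hLx : L.extend x = L (e 1) := by simpa [e] using L.extend_apply (e 1)
  simpa [L] using hLx

variable {n : Type*} [Fintype n] [DecidableEq n]

lemma exists_unitaryGroup_mulVec_eq {x y : n → 𝕜} (h : star x ⬝ᵥ x = star y ⬝ᵥ y) :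
    ∃ U : unitaryGroup n 𝕜, (U : Matrix n n 𝕜) *ᵥ x = y := by
  have hnorm : ‖WithLp.toLp 2 x‖ = ‖WithLp.toLp 2 y‖ := by
    simp only [@norm_eq_sqrt_re_inner 𝕜, EuclideanSpace.inner_toLp_toLp, dotProduct_comm _ (star _),
      h]
  obtain ⟨f, hf⟩ := exists_linearIsometryEquiv_apply_eq (𝕜 := 𝕜) hnorm
  let b := EuclideanSpace.basisFun n 𝕜
  refine ⟨⟨_, f.toMatrix_mem_unitaryGroup b b⟩, ?_⟩
  have hrepr (z : EuclideanSpace 𝕜 n) : ⇑(b.toBasis.repr z) = z := by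
    ext
    simp [b]
  have hmul := LinearMap.toMatrix_mulVec_repr b.toBasis b.toBasis f.toLinearMap (WithLp.toLp 2 x)
  rw [hrepr, hrepr] at hmul
  exact hmul.trans (congrArg WithLp.ofLp hf)

lemma range_unitaryGroup_mulVec (x : n → 𝕜) :
    Set.range (fun U : unitaryGroup n 𝕜 ↦ (U : Matrix n n 𝕜) *ᵥ x) =
      {y | star y ⬝ᵥ y = star x ⬝ᵥ x} := by
  ext y
  constructor
  · rintro ⟨U, rfl⟩
    exact star_mulVec_dotProduct_mulVec_of_conjTranspose_mul_self (mem_unitaryGroup_iff'.mp U.2) x x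
  · exact fun hy ↦ exists_unitaryGroup_mulVec_eq (Eq.symm hy)

end UnitaryOrbit

section Rayleigh

variable {𝕜 n : Type*} [RCLike 𝕜] [Fintype n] [DecidableEq n] {A : Matrix n n 𝕜}

open scoped MatrixOrder in
lemma mul_iInf_eigenvalues_le_re_star_dotProduct_mulVec (hA : A.IsHermitian) (x : n → 𝕜) :
    RCLike.re (star x ⬝ᵥ x) * ⨅ i, hA.eigenvalues i ≤ RCLike.re (star x ⬝ᵥ A *ᵥ x) := by
  have hle : algebraMap ℝ (Matrix n n 𝕜) (⨅ i, hA.eigenvalues i) ≤ A := by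
    refine algebraMap_le_of_le_spectrum ?_ hA.isSelfAdjoint
    rw [hA.spectrum_real_eq_range_eigenvalues, Set.forall_mem_range]
    exact ciInf_le (Set.finite_range _).bddBelow
  have hnonneg := (Matrix.le_iff.mp hle).re_dotProduct_nonneg x
  rw [sub_mulVec, dotProduct_sub, map_sub, sub_nonneg] at hnonneg
  simpa [Algebra.algebraMap_eq_smul_one, smul_mulVec, RCLike.smul_re, mul_comm] using hnonneg

lemma exists_re_star_dotProduct_mulVec_eq_mul_eigenvalues (hA : A.IsHermitian) (x : n → 𝕜) (i : n) :
    ∃ y : n → 𝕜, star y ⬝ᵥ y = star x ⬝ᵥ x ∧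
      RCLike.re (star y ⬝ᵥ A *ᵥ y) = RCLike.re (star x ⬝ᵥ x) * hA.eigenvalues i := by
  let b : n → 𝕜 := hA.eigenvectorBasis i
  have hb : star b ⬝ᵥ b = 1 := by
    rw [dotProduct_comm]
    exact inner_self_eq_one_of_norm_eq_one (hA.eigenvectorBasis.norm_eq_one i)
  have hx : star x ⬝ᵥ x = (‖WithLp.toLp 2 x‖ : 𝕜) ^ 2 := by
    rw [dotProduct_comm, ← EuclideanSpace.inner_toLp_toLp, inner_self_eq_norm_sq_to_K]
  let y := (‖WithLp.toLp 2 x‖ : 𝕜) • b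
  have hy : star y ⬝ᵥ y = star x ⬝ᵥ x := by simp [y, hx, hb, sq, RCLike.real_smul_eq_coe_mul]
  have hAy : A *ᵥ y = hA.eigenvalues i • y := by
    rw [mulVec_smul, hA.mulVec_eigenvectorBasis, smul_comm]
  exact ⟨y, hy, by rw [hAy, dotProduct_smul, hy, RCLike.smul_re, mul_comm]⟩

theorem isLeast_re_star_dotProduct_mulVec (hA : A.IsHermitian) (x : n → 𝕜) :
    IsLeast ((fun y ↦ RCLike.re (star y ⬝ᵥ A *ᵥ y)) '' {y | star y ⬝ᵥ y = star x ⬝ᵥ x})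
      (RCLike.re (star x ⬝ᵥ x) * ⨅ i, hA.eigenvalues i) := by
  constructor
  · obtain _ | _ := isEmpty_or_nonempty n
    · exact ⟨x, rfl, by simp⟩
    obtain ⟨i, hi⟩ := exists_eq_ciInf_of_finite (f := hA.eigenvalues)
    rw [← hi]
    exact exists_re_star_dotProduct_mulVec_eq_mul_eigenvalues hA x i
  · rintro _ ⟨y, hy, rfl⟩
    rw [← show star y ⬝ᵥ y = star x ⬝ᵥ x from hy]
    exact mul_iInf_eigenvalues_le_re_star_dotProduct_mulVec hA y

end Rayleigh

theorem ergotropy_pure_state_general {ι : Type*} [Fintype ι] [DecidableEq ι]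
    {H : Matrix ι ι ℂ} (hH : H.IsHermitian) (ψ : ι → ℂ) :
    ergotropy (ketbra ψ) H =
      (star ψ ⬝ᵥ H *ᵥ ψ).re - (star ψ ⬝ᵥ ψ).re * ⨅ i, hH.eigenvalues i := by
  let energy : (ι → ℂ) → ℝ := fun φ ↦ (star φ ⬝ᵥ H *ᵥ φ).re
  have hinf : ⨅ V : unitaryGroup ι ℂ, energy ((V : Matrix ι ι ℂ) *ᵥ ψ) =
      (star ψ ⬝ᵥ ψ).re * ⨅ i, hH.eigenvalues i := by
    rw [iInf, Set.range_comp' energy, range_unitaryGroup_mulVec]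
    exact (isLeast_re_star_dotProduct_mulVec hH ψ).csInf_eq
  simp only [ergotropy, star_eq_conjTranspose, mul_ketbra_mul_conjTranspose, trace_ketbra_mul]
  rw [hinf]

/-- ergotropy of a pure state: ξ(|ψ⟩⟨ψ|, H) = ⟨ψ, Hψ⟩ − ε_min. -/
theorem ergotropy_pure_state {ι : Type*} [Fintype ι] [DecidableEq ι]
    {H : Matrix ι ι ℂ} (hH : H.IsHermitian)
    (ψ : ι → ℂ) (hψ : star ψ ⬝ᵥ ψ = 1) :
    ergotropy (ketbra ψ) H = (star ψ ⬝ᵥ H.mulVec ψ).re - ⨅ i, hH.eigenvalues i := by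
  rw [ergotropy_pure_state_general hH, hψ, Complex.one_re, one_mul]
end

section
/- (Eq. (6): EMIN equals the change in ergotropic gap) Let H := A ⊗ I_m + I_n ⊗ B with A an n×n and B an m×m Hermitian matrix, let ρ be an nm×nm density matrix, and let (P_k) be a family of pairwise-orthogonal n×n orthogonal projections summing to I_n such that ∑_k P_k ρ_a P_k = ρ_a, where ρ_a is the n×n matrix with entries (ρ_a)_{i i'} = ∑_j ρ_{(i,j),(i',j)}. Let Π(ρ) := ∑_k (P_k ⊗ I_m) ρ (P_k ⊗ I_m). Then ξ(ρ,H) − ξ(Π(ρ),H) = δ(ρ) − δ(Π(ρ)), where δ(σ) := ξ(σ,H) − ξ^l(σ,H) is the ergotropic gap. -/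
open scoped BigOperators ComplexOrder
open Matrix Kronecker

/-!
Conjugating a non-interacting Hamiltonian by a local unitary `U ⊗ V` gives another non-interacting
Hamiltonian, so every energy `Tr((U ⊗ V) ρ (U ⊗ V)* H)` depends on `ρ` only through its two
marginals, and therefore so does the local ergotropy. The measurement fixes the first marginal by
assumption, and the second because it acts on the first factor alone, with `∑ k, P k * P k = 1`.
So the local ergotropy does not change, and the ergotropy and the ergotropic gap change by the same
amount.
-/

section Kronecker

variable {ι ι' κ κ' K R : Type*}

lemma sum_kronecker [NonUnitalNonAssocSemiring R] [Fintype K] (X : K → Matrix ι ι' R)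
    (Y : Matrix κ κ' R) : (∑ k, X k) ⊗ₖ Y = ∑ k, X k ⊗ₖ Y := by
  ext p q
  simp [Matrix.sum_apply, Finset.sum_mul]

lemma star_kronecker_mul_kroneckerSum_mul_kronecker [Fintype ι] [DecidableEq ι] [Fintype κ]
    [DecidableEq κ] [CommRing R] [StarRing R] (U : unitaryGroup ι R) (V : unitaryGroup κ R)
    (A : Matrix ι ι R) (B : Matrix κ κ R) :
    star (U.1 ⊗ₖ V.1) * (A ⊗ₖ 1 + 1 ⊗ₖ B) * (U.1 ⊗ₖ V.1) =
      (star U.1 * A * U.1) ⊗ₖ 1 + 1 ⊗ₖ (star V.1 * B * V.1) := by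
  have star_kronecker : star (U.1 ⊗ₖ V.1) = star U.1 ⊗ₖ star V.1 := conjTranspose_kronecker _ _
  simp only [star_kronecker, mul_add, add_mul, ← mul_kronecker_mul, mul_one,
    UnitaryGroup.star_mul_self]

end Kronecker

section Marginals

variable {n m : ℕ} (ρ : Matrix (Fin n × Fin m) (Fin n × Fin m) ℂ)

lemma trace_mul_kronecker_one (X : Matrix (Fin n) (Fin n) ℂ) :
    (ρ * (X ⊗ₖ 1)).trace = (marginalA ρ * X).trace := by
  simp only [trace, diag, mul_apply, Fintype.sum_prod_type, marginalA, of_apply,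
    kroneckerMap_apply, one_apply, Finset.sum_mul]
  refine Finset.sum_congr rfl fun i _ => ?_
  rw [Finset.sum_comm]
  simp

lemma trace_mul_one_kronecker (Y : Matrix (Fin m) (Fin m) ℂ) :
    (ρ * (1 ⊗ₖ Y)).trace = (marginalB ρ * Y).trace := by
  simp only [trace, diag, mul_apply, Fintype.sum_prod_type_right, marginalB, of_apply,
    kroneckerMap_apply, one_apply, Finset.sum_mul]
  refine Finset.sum_congr rfl fun j _ => ?_
  rw [Finset.sum_comm]
  simp

lemma trace_mul_kroneckerSum (A : Matrix (Fin n) (Fin n) ℂ) (B : Matrix (Fin m) (Fin m) ℂ) :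
    (ρ * (A ⊗ₖ 1 + 1 ⊗ₖ B)).trace = (marginalA ρ * A).trace + (marginalB ρ * B).trace := by
  rw [mul_add, trace_add, trace_mul_kronecker_one, trace_mul_one_kronecker]

lemma trace_kronecker_conj_mul_kroneckerSum (U : unitaryGroup (Fin n) ℂ)
    (V : unitaryGroup (Fin m) ℂ) (A : Matrix (Fin n) (Fin n) ℂ) (B : Matrix (Fin m) (Fin m) ℂ) :
    ((U.1 ⊗ₖ V.1) * ρ * star (U.1 ⊗ₖ V.1) * (A ⊗ₖ 1 + 1 ⊗ₖ B)).trace =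
      (marginalA ρ * (star U.1 * A * U.1)).trace + (marginalB ρ * (star V.1 * B * V.1)).trace := by
  rw [← trace_mul_kroneckerSum, ← star_kronecker_mul_kroneckerSum_mul_kronecker, mul_assoc,
    mul_assoc, trace_mul_comm, mul_assoc]

variable {ρ} in
theorem localErgotropy_kroneckerSum_congr {σ : Matrix (Fin n × Fin m) (Fin n × Fin m) ℂ}
    (hA : marginalA ρ = marginalA σ) (hB : marginalB ρ = marginalB σ)
    (A : Matrix (Fin n) (Fin n) ℂ) (B : Matrix (Fin m) (Fin m) ℂ) :
    localErgotropy ρ (A ⊗ₖ 1 + 1 ⊗ₖ B) = localErgotropy σ (A ⊗ₖ 1 + 1 ⊗ₖ B) := by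
  simp only [localErgotropy, trace_kronecker_conj_mul_kroneckerSum, hA, hB]
  rw [trace_mul_kroneckerSum, trace_mul_kroneckerSum, hA, hB]

end Marginals

section Pinching

variable {n m : ℕ} {K : Type*} [Fintype K] (P : K → Matrix (Fin n) (Fin n) ℂ)
  (ρ : Matrix (Fin n × Fin m) (Fin n × Fin m) ℂ)

lemma trace_pinch_mul_kronecker (X : Matrix (Fin n) (Fin n) ℂ) (Y : Matrix (Fin m) (Fin m) ℂ) :
    (pinch P ρ * (X ⊗ₖ Y)).trace = (ρ * ((∑ k, P k * X * P k) ⊗ₖ Y)).trace := by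
  simp only [pinch, sum_kronecker, Finset.sum_mul, Finset.mul_sum, trace_sum]
  refine Finset.sum_congr rfl fun k _ => ?_
  calc ((P k ⊗ₖ 1) * ρ * (P k ⊗ₖ 1) * (X ⊗ₖ Y)).trace
      = (ρ * ((P k ⊗ₖ 1) * (X ⊗ₖ Y) * (P k ⊗ₖ 1))).trace := by
        rw [mul_assoc, mul_assoc, trace_mul_comm, mul_assoc]
    _ = (ρ * ((P k * X * P k) ⊗ₖ Y)).trace := by
        rw [← mul_kronecker_mul, ← mul_kronecker_mul, one_mul, mul_one]

theorem marginalA_pinch : marginalA (pinch P ρ) = ∑ k, P k * marginalA ρ * P k := by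
  refine ext_iff_trace_mul_right.2 fun X => ?_
  rw [← trace_mul_kronecker_one, trace_pinch_mul_kronecker, trace_mul_kronecker_one,
    Finset.mul_sum, Finset.sum_mul, trace_sum, trace_sum]
  refine Finset.sum_congr rfl fun k _ => ?_
  rw [← mul_assoc, trace_mul_comm]
  simp only [mul_assoc]

variable {P} in
theorem marginalB_pinch (hP : ∑ k, P k * P k = 1) : marginalB (pinch P ρ) = marginalB ρ := by
  refine ext_iff_trace_mul_right.2 fun Y => ?_
  rw [← trace_mul_one_kronecker, trace_pinch_mul_kronecker, ← trace_mul_one_kronecker]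
  simp only [mul_one, hP]

end Pinching

theorem emin_eq_ergotropicGap_change_general {n m : ℕ}
    {A : Matrix (Fin n) (Fin n) ℂ} {B : Matrix (Fin m) (Fin m) ℂ}
    (H : Matrix (Fin n × Fin m) (Fin n × Fin m) ℂ) (hH : H = A ⊗ₖ 1 + 1 ⊗ₖ B)
    {ρ : Matrix (Fin n × Fin m) (Fin n × Fin m) ℂ}
    {K : Type*} [Fintype K] (P : K → Matrix (Fin n) (Fin n) ℂ)
    (hP : ∑ k, P k * P k = 1)
    (hPinv : ∑ k, P k * marginalA ρ * P k = marginalA ρ) :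
    ergotropy ρ H - ergotropy (pinch P ρ) H
      = (ergotropy ρ H - localErgotropy ρ H)
        - (ergotropy (pinch P ρ) H - localErgotropy (pinch P ρ) H) := by
  have localErgotropy_pinch : localErgotropy (pinch P ρ) H = localErgotropy ρ H :=
    hH ▸ localErgotropy_kroneckerSum_congr ((marginalA_pinch P ρ).trans hPinv)
      (marginalB_pinch ρ hP) A B
  rw [localErgotropy_pinch, sub_sub_sub_cancel_right]

/-- Eq. (6) of the paper: for non-interacting Hamiltonians, EMIN equals
the change in ergotropic gap under the measurement. -/
theorem emin_eq_ergotropicGap_change {n m : ℕ}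
    {A : Matrix (Fin n) (Fin n) ℂ} {B : Matrix (Fin m) (Fin m) ℂ}
    (hA : A.IsHermitian) (hB : B.IsHermitian)
    (H : Matrix (Fin n × Fin m) (Fin n × Fin m) ℂ)
    (hHdef : H = A ⊗ₖ (1 : Matrix (Fin m) (Fin m) ℂ)
        + (1 : Matrix (Fin n) (Fin n) ℂ) ⊗ₖ B)
    {ρ : Matrix (Fin n × Fin m) (Fin n × Fin m) ℂ}
    (hρ : ρ.PosSemidef) (hρtr : ρ.trace = 1)
    {K : Type*} [Fintype K] (P : K → Matrix (Fin n) (Fin n) ℂ)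
    (hPherm : ∀ k, (P k)ᴴ = P k) (hPidem : ∀ k, P k * P k = P k)
    (hPorth : ∀ k l, k ≠ l → P k * P l = 0)
    (hPsum : ∑ k, P k = (1 : Matrix (Fin n) (Fin n) ℂ))
    (hPinv : ∑ k, P k * marginalA ρ * P k = marginalA ρ) :
    ergotropy ρ H - ergotropy (pinch P ρ) H
      = (ergotropy ρ H - localErgotropy ρ H)
        - (ergotropy (pinch P ρ) H - localErgotropy (pinch P ρ) H) :=
  emin_eq_ergotropicGap_change_general H hHdef P (by simpa only [hPidem] using hPsum) hPinv
end

section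
/- Let H := A ⊗ I_m + I_n ⊗ B with A an n×n and B an m×m Hermitian matrix, let ρ be an nm×nm density matrix, and let (P_k) be a family of pairwise-orthogonal n×n orthogonal projections summing to I_n such that ∑_k P_k ρ_a P_k = ρ_a, where ρ_a is the n×n matrix with entries (ρ_a)_{i i'} = ∑_j ρ_{(i,j),(i',j)}. Then the measurement preserves the energy: Tr(Π(ρ) H) = Tr(ρ H), where Π(ρ) := ∑_k (P_k ⊗ I_m) ρ (P_k ⊗ I_m). -/
open scoped BigOperators ComplexOrder
open Matrix Kronecker

/-!
The energy of a non-interacting Hamiltonian depends only on the two marginals: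
`Tr(ρ (A ⊗ I + I ⊗ B)) = Tr(ρ_a A) + Tr(ρ_b B)`. An operation on the first factor acts on `ρ_a` by
the same operator sum, and it leaves `ρ_b` unchanged (no signalling): cycled around the trace over
the first factor, its operators combine to `∑ P_k P_k = I`.
-/

section Entries

variable {R ι a b c d : Type*} [NonAssocSemiring R]

theorem mul_kronecker_one_apply [Fintype b] [Fintype c] [DecidableEq c]
    (ρ : Matrix ι (b × c) R) (X : Matrix b d R) (i : ι) (p : d × c) :
    (ρ * (X ⊗ₖ (1 : Matrix c c R))) i p = ∑ j, ρ i (j, p.2) * X j p.1 := by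
  simp [mul_apply, Fintype.sum_prod_type, one_apply]

theorem kronecker_one_mul_apply [Fintype b] [Fintype c] [DecidableEq c]
    (X : Matrix a b R) (ρ : Matrix (b × c) ι R) (p : a × c) (i : ι) :
    ((X ⊗ₖ (1 : Matrix c c R)) * ρ) p i = ∑ j, X p.1 j * ρ (j, p.2) i := by
  simp [mul_apply, Fintype.sum_prod_type, one_apply]

theorem mul_one_kronecker_apply [Fintype b] [Fintype c] [DecidableEq b]
    (ρ : Matrix ι (b × c) R) (Y : Matrix c d R) (i : ι) (p : b × d) :
    (ρ * ((1 : Matrix b b R) ⊗ₖ Y)) i p = ∑ j, ρ i (p.1, j) * Y j p.2 := by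
  simp [mul_apply, Fintype.sum_prod_type, one_apply]

end Entries

theorem sum_kronecker_s13 {R a b c d K : Type*} [NonUnitalNonAssocSemiring R] (s : Finset K)
    (X : K → Matrix a b R) (Y : Matrix c d R) : (∑ k ∈ s, X k) ⊗ₖ Y = ∑ k ∈ s, X k ⊗ₖ Y := by
  ext ⟨i, j⟩ ⟨i', j'⟩
  simp only [Matrix.sum_apply, kronecker_apply, Finset.sum_mul]

section PartialTrace

variable {R a b c d K : Type*}

/-- The partial trace over the second tensor factor, for possibly rectangular matrices. On a density
matrix it gives the first marginal, so `marginalA` is a special case by definition. -/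
def partialTraceRight [AddCommMonoid R] [Fintype c] (ρ : Matrix (a × c) (b × c) R) : Matrix a b R :=
  of fun i i' => ∑ j, ρ (i, j) (i', j)

/-- The partial trace over the first tensor factor, for possibly rectangular matrices. On a density
matrix it gives the second marginal, so `marginalB` is a special case by definition. -/
def partialTraceLeft [AddCommMonoid R] [Fintype a] (ρ : Matrix (a × c) (a × d) R) : Matrix c d R :=
  of fun j j' => ∑ i, ρ (i, j) (i, j')

theorem partialTraceRight_apply [AddCommMonoid R] [Fintype c] (ρ : Matrix (a × c) (b × c) R)
    (i : a) (i' : b) : partialTraceRight ρ i i' = ∑ j, ρ (i, j) (i', j) :=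
  rfl

theorem partialTraceLeft_apply [AddCommMonoid R] [Fintype a] (ρ : Matrix (a × c) (a × d) R)
    (j : c) (j' : d) : partialTraceLeft ρ j j' = ∑ i, ρ (i, j) (i, j') :=
  rfl

theorem trace_partialTraceRight [AddCommMonoid R] [Fintype a] [Fintype c]
    (ρ : Matrix (a × c) (a × c) R) : (partialTraceRight ρ).trace = ρ.trace :=
  (Fintype.sum_prod_type fun p => ρ p p).symm

theorem trace_partialTraceLeft [AddCommMonoid R] [Fintype a] [Fintype c]
    (ρ : Matrix (a × c) (a × c) R) : (partialTraceLeft ρ).trace = ρ.trace :=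
  (Fintype.sum_prod_type_right fun p => ρ p p).symm

theorem partialTraceRight_sum [AddCommMonoid R] [Fintype c] (s : Finset K)
    (ρ : K → Matrix (a × c) (b × c) R) :
    partialTraceRight (∑ k ∈ s, ρ k) = ∑ k ∈ s, partialTraceRight (ρ k) := by
  ext i i'
  simp only [partialTraceRight_apply, Matrix.sum_apply]
  exact Finset.sum_comm

theorem partialTraceLeft_sum [AddCommMonoid R] [Fintype a] (s : Finset K)
    (ρ : K → Matrix (a × c) (a × d) R) :
    partialTraceLeft (∑ k ∈ s, ρ k) = ∑ k ∈ s, partialTraceLeft (ρ k) := by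
  ext j j'
  simp only [partialTraceLeft_apply, Matrix.sum_apply]
  exact Finset.sum_comm

theorem partialTraceRight_mul_kronecker_one [NonAssocSemiring R] [Fintype b] [Fintype c]
    [DecidableEq c] (ρ : Matrix (a × c) (b × c) R) (X : Matrix b d R) :
    partialTraceRight (ρ * (X ⊗ₖ (1 : Matrix c c R))) = partialTraceRight ρ * X := by
  ext i i'
  rw [partialTraceRight_apply, mul_apply]
  simp only [partialTraceRight_apply, mul_kronecker_one_apply, Finset.sum_mul]
  exact Finset.sum_comm

theorem partialTraceRight_kronecker_one_mul [NonAssocSemiring R] [Fintype b] [Fintype c]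
    [DecidableEq c] (X : Matrix a b R) (ρ : Matrix (b × c) (d × c) R) :
    partialTraceRight ((X ⊗ₖ (1 : Matrix c c R)) * ρ) = X * partialTraceRight ρ := by
  ext i i'
  rw [partialTraceRight_apply, mul_apply]
  simp only [partialTraceRight_apply, kronecker_one_mul_apply, Finset.mul_sum]
  exact Finset.sum_comm

theorem partialTraceLeft_mul_one_kronecker {e : Type*} [NonAssocSemiring R] [Fintype a] [Fintype d]
    [DecidableEq a] (ρ : Matrix (a × c) (a × d) R) (Y : Matrix d e R) :
    partialTraceLeft (ρ * ((1 : Matrix a a R) ⊗ₖ Y)) = partialTraceLeft ρ * Y := by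
  ext j j'
  rw [partialTraceLeft_apply, mul_apply]
  simp only [partialTraceLeft_apply, mul_one_kronecker_apply, Finset.sum_mul]
  exact Finset.sum_comm

theorem partialTraceLeft_kronecker_one_mul_comm [CommSemiring R] [Fintype a] [Fintype b]
    [Fintype c] [Fintype d] [DecidableEq c] [DecidableEq d]
    (X : Matrix a b R) (ρ : Matrix (b × c) (a × d) R) :
    partialTraceLeft ((X ⊗ₖ (1 : Matrix c c R)) * ρ) =
      partialTraceLeft (ρ * (X ⊗ₖ (1 : Matrix d d R))) := by
  ext j j'
  simp only [partialTraceLeft_apply, kronecker_one_mul_apply, mul_kronecker_one_apply]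
  rw [Finset.sum_comm]
  simp only [mul_comm]

end PartialTrace

theorem trace_mul_kronecker_one_add_one_kronecker {R a b : Type*} [NonAssocSemiring R] [Fintype a]
    [Fintype b] [DecidableEq a] [DecidableEq b] (ρ : Matrix (a × b) (a × b) R)
    (A : Matrix a a R) (B : Matrix b b R) :
    (ρ * (A ⊗ₖ (1 : Matrix b b R) + (1 : Matrix a a R) ⊗ₖ B)).trace =
      (partialTraceRight ρ * A).trace + (partialTraceLeft ρ * B).trace := by
  rw [mul_add, trace_add, ← partialTraceRight_mul_kronecker_one, trace_partialTraceRight,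
    ← partialTraceLeft_mul_one_kronecker, trace_partialTraceLeft]

section LocalOperation

variable {R a b c d a' b' K : Type*} [Fintype a] [Fintype b] [Fintype c] [Fintype d]
  [Fintype K] [DecidableEq c] [DecidableEq d]

/-- The map `ρ ↦ ∑ k, (E k ⊗ I) ρ (F k ⊗ I)`, acting on the first tensor factor only. A quantum
channel with Kraus operators `E k` is the case `F k = (E k)ᴴ`, and `pinch P` is by definition the
case `E = F = P`. -/
def localOperation [NonAssocSemiring R] (E : K → Matrix a' a R) (F : K → Matrix b b' R)
    (ρ : Matrix (a × c) (b × d) R) : Matrix (a' × c) (b' × d) R :=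
  ∑ k, (E k ⊗ₖ (1 : Matrix c c R)) * ρ * (F k ⊗ₖ (1 : Matrix d d R))

theorem partialTraceRight_localOperation [NonAssocSemiring R] (E : K → Matrix a' a R)
    (F : K → Matrix b b' R) (ρ : Matrix (a × c) (b × c) R) :
    partialTraceRight (localOperation E F ρ) = ∑ k, E k * partialTraceRight ρ * F k := by
  simp only [localOperation, partialTraceRight_sum, partialTraceRight_mul_kronecker_one,
    partialTraceRight_kronecker_one_mul]

theorem partialTraceLeft_localOperation [CommSemiring R] [Fintype a'] [DecidableEq a]
    {E : K → Matrix a' a R} {F : K → Matrix a a' R} (hFE : ∑ k, F k * E k = 1)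
    (ρ : Matrix (a × c) (a × d) R) :
    partialTraceLeft (localOperation E F ρ) = partialTraceLeft ρ :=
  calc partialTraceLeft (localOperation E F ρ)
    _ = ∑ k, partialTraceLeft (ρ * ((F k * E k) ⊗ₖ (1 : Matrix d d R))) := by
      simp only [localOperation, partialTraceLeft_sum, Matrix.mul_assoc,
        partialTraceLeft_kronecker_one_mul_comm, ← mul_kronecker_mul, Matrix.mul_one]
    _ = partialTraceLeft (ρ * ((∑ k, F k * E k) ⊗ₖ (1 : Matrix d d R))) := by
      rw [← partialTraceLeft_sum, ← Matrix.mul_sum, ← sum_kronecker_s13]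
    _ = partialTraceLeft ρ := by
      rw [hFE, one_kronecker_one, Matrix.mul_one]

end LocalOperation

theorem pinch_preserves_energy_noninteracting_general {R a b K : Type*} [CommSemiring R]
    [Fintype a] [Fintype b] [Fintype K] [DecidableEq a] [DecidableEq b]
    (A : Matrix a a R) (B : Matrix b b R) {ρ : Matrix (a × b) (a × b) R} {E F : K → Matrix a a R}
    (hFE : ∑ k, F k * E k = 1)
    (hinv : ∑ k, E k * partialTraceRight ρ * F k = partialTraceRight ρ) :
    (localOperation E F ρ * (A ⊗ₖ (1 : Matrix b b R) + (1 : Matrix a a R) ⊗ₖ B)).trace =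
      (ρ * (A ⊗ₖ (1 : Matrix b b R) + (1 : Matrix a a R) ⊗ₖ B)).trace := by
  rw [trace_mul_kronecker_one_add_one_kronecker, partialTraceRight_localOperation, hinv,
    partialTraceLeft_localOperation hFE, ← trace_mul_kronecker_one_add_one_kronecker]

/-- a locally invariant measurement preserves the energy for
non-interacting Hamiltonians. -/
theorem pinch_preserves_energy_noninteracting {n m : ℕ}
    {A : Matrix (Fin n) (Fin n) ℂ} {B : Matrix (Fin m) (Fin m) ℂ}
    (hA : A.IsHermitian) (hB : B.IsHermitian)
    (H : Matrix (Fin n × Fin m) (Fin n × Fin m) ℂ)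
    (hHdef : H = A ⊗ₖ (1 : Matrix (Fin m) (Fin m) ℂ)
        + (1 : Matrix (Fin n) (Fin n) ℂ) ⊗ₖ B)
    {ρ : Matrix (Fin n × Fin m) (Fin n × Fin m) ℂ}
    (hρ : ρ.PosSemidef) (hρtr : ρ.trace = 1)
    {K : Type*} [Fintype K] (P : K → Matrix (Fin n) (Fin n) ℂ)
    (hPherm : ∀ k, (P k)ᴴ = P k) (hPidem : ∀ k, P k * P k = P k)
    (hPorth : ∀ k l, k ≠ l → P k * P l = 0)
    (hPsum : ∑ k, P k = (1 : Matrix (Fin n) (Fin n) ℂ))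
    (hPinv : ∑ k, P k * marginalA ρ * P k = marginalA ρ) :
    (pinch P ρ * H).trace = (ρ * H).trace := by
  subst hHdef
  exact pinch_preserves_energy_noninteracting_general A B (by simpa only [hPidem] using hPsum) hPinv
end
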